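/- arXiv:2103.04334 — 5 statements merged into one kernel-verified Lean document; each statement's English description precedes it below -/
import Mathlib

section
/- Let F be a field with char F ≠ 2 and char F ≠ 3, and let A be an F-algebra whose bilinear multiplication satisfies the alternative laws (xx)y = x(xy) and y(xx) = (yx)x for all x, y ∈ A. Define the commutator [x,y] = xy − yx. Then A with the product [ , ] is a Malcev algebra: [x,x] = 0 for all x, and J(x,y,[x,z]) = [J(x,y,z), x] for all x, y, z ∈ A, where J(x,y,z) = [[x,y],z] + [[y,z],x] + [[z,x],y]. -/
open TensorProduct

/-- Multiplication of the 7-dimensional simple non-Lie Malcev algebra `M₇(F)`,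
realised on `Fin 7 → F`; the index `t` corresponds to the basis element `e_{t+1}`. -/
def m7mul {F : Type*} [Field F] (a b : Fin 7 → F) : Fin 7 → F :=
  ![(a 1 * b 4 - a 4 * b 1) + (a 2 * b 5 - a 5 * b 2) + (a 3 * b 6 - a 6 * b 3),
    2 * (a 0 * b 1 - a 1 * b 0) - 2 * (a 5 * b 6 - a 6 * b 5),
    2 * (a 0 * b 2 - a 2 * b 0) + 2 * (a 4 * b 6 - a 6 * b 4),
    2 * (a 0 * b 3 - a 3 * b 0) - 2 * (a 4 * b 5 - a 5 * b 4),
    -2 * (a 0 * b 4 - a 4 * b 0) + 2 * (a 2 * b 3 - a 3 * b 2),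
    -2 * (a 0 * b 5 - a 5 * b 0) - 2 * (a 1 * b 3 - a 3 * b 1),
    -2 * (a 0 * b 6 - a 6 * b 0) + 2 * (a 1 * b 2 - a 2 * b 1)]

/-- Multiplication of the 7-dimensional Malcev algebra `𝕄₇(γ)` coming from the
division Cayley–Dickson algebra, realised on `Fin 7 → F`; the indices
`0,…,6` correspond to the basis `i, j, k, v, vi, vj, vk`. -/
def mGammaMul {F : Type*} [Field F] (γ : F) (a b : Fin 7 → F) : Fin 7 → F :=
  ![2 * (a 1 * b 2 - a 2 * b 1) + 2 * γ * (a 3 * b 4 - a 4 * b 3)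
      + 2 * γ * (a 5 * b 6 - a 6 * b 5),
    -2 * (a 0 * b 2 - a 2 * b 0) + 2 * γ * (a 3 * b 5 - a 5 * b 3)
      - 2 * γ * (a 4 * b 6 - a 6 * b 4),
    2 * (a 0 * b 1 - a 1 * b 0) + 2 * γ * (a 3 * b 6 - a 6 * b 3)
      + 2 * γ * (a 4 * b 5 - a 5 * b 4),
    2 * (a 0 * b 4 - a 4 * b 0) + 2 * (a 1 * b 5 - a 5 * b 1)
      + 2 * (a 2 * b 6 - a 6 * b 2),
    -2 * (a 0 * b 3 - a 3 * b 0) - 2 * (a 1 * b 6 - a 6 * b 1)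
      + 2 * (a 2 * b 5 - a 5 * b 2),
    2 * (a 0 * b 6 - a 6 * b 0) - 2 * (a 1 * b 3 - a 3 * b 1)
      - 2 * (a 2 * b 4 - a 4 * b 2),
    -2 * (a 0 * b 5 - a 5 * b 0) + 2 * (a 1 * b 4 - a 4 * b 1)
      - 2 * (a 2 * b 3 - a 3 * b 2)]

/-- The Jacobian `J(x,y,z) = (xy)z + (yz)x + (zx)y` of a multiplication. -/
def malJac {A : Type*} [Add A] (mul : A → A → A) (x y z : A) : A :=
  mul (mul x y) z + mul (mul y z) x + mul (mul z x) y

/-- `mul` is a Malcev multiplication: `x·x = 0` and `J(x,y,xz) = J(x,y,z)·x`. -/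
def IsMalcevFun {A : Type*} [AddCommGroup A] (mul : A → A → A) : Prop :=
  (∀ x, mul x x = 0) ∧
    ∀ x y z, malJac mul x y (mul x z) = mul (malJac mul x y z) x

/-- `e 0, …, e 6` is a copy of the standard basis `e₁, …, e₇` of `M₇(F)`:
linearly independent elements multiplying according to the `M₇(F)` table. -/
def IsM7Copy {F M : Type*} [Field F] [AddCommGroup M] [Module F M]
    (mul : M →ₗ[F] M →ₗ[F] M) (e : Fin 7 → M) : Prop :=
  LinearIndependent F e ∧
  (∀ s t : Fin 7, mul (e s) (e t) = - mul (e t) (e s)) ∧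
  mul (e 0) (e 1) = (2 : F) • e 1 ∧
  mul (e 0) (e 2) = (2 : F) • e 2 ∧
  mul (e 0) (e 3) = (2 : F) • e 3 ∧
  mul (e 0) (e 4) = (-2 : F) • e 4 ∧
  mul (e 0) (e 5) = (-2 : F) • e 5 ∧
  mul (e 0) (e 6) = (-2 : F) • e 6 ∧
  mul (e 1) (e 2) = (2 : F) • e 6 ∧
  mul (e 1) (e 3) = (-2 : F) • e 5 ∧
  mul (e 1) (e 4) = e 0 ∧
  mul (e 1) (e 5) = 0 ∧
  mul (e 1) (e 6) = 0 ∧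
  mul (e 2) (e 3) = (2 : F) • e 4 ∧
  mul (e 2) (e 4) = 0 ∧
  mul (e 2) (e 5) = e 0 ∧
  mul (e 2) (e 6) = 0 ∧
  mul (e 3) (e 4) = 0 ∧
  mul (e 3) (e 5) = 0 ∧
  mul (e 3) (e 6) = e 0 ∧
  mul (e 4) (e 5) = (-2 : F) • e 3 ∧
  mul (e 4) (e 6) = (2 : F) • e 2 ∧
  mul (e 5) (e 6) = (-2 : F) • e 1

/-- `e 0, …, e 6` is a copy of the basis `i, j, k, v, vi, vj, vk` of `𝕄₇(γ)`:
linearly independent elements multiplying according to the `𝕄₇(γ)` table. -/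
def IsMGammaCopy {F M : Type*} [Field F] [AddCommGroup M] [Module F M]
    (γ : F) (mul : M →ₗ[F] M →ₗ[F] M) (e : Fin 7 → M) : Prop :=
  LinearIndependent F e ∧
  (∀ s t : Fin 7, mul (e s) (e t) = - mul (e t) (e s)) ∧
  mul (e 0) (e 1) = (2 : F) • e 2 ∧
  mul (e 0) (e 2) = (-2 : F) • e 1 ∧
  mul (e 0) (e 3) = (-2 : F) • e 4 ∧
  mul (e 0) (e 4) = (2 : F) • e 3 ∧
  mul (e 0) (e 5) = (-2 : F) • e 6 ∧
  mul (e 0) (e 6) = (2 : F) • e 5 ∧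
  mul (e 1) (e 2) = (2 : F) • e 0 ∧
  mul (e 1) (e 3) = (-2 : F) • e 5 ∧
  mul (e 1) (e 4) = (2 : F) • e 6 ∧
  mul (e 1) (e 5) = (2 : F) • e 3 ∧
  mul (e 1) (e 6) = (-2 : F) • e 4 ∧
  mul (e 2) (e 3) = (-2 : F) • e 6 ∧
  mul (e 2) (e 4) = (-2 : F) • e 5 ∧
  mul (e 2) (e 5) = (2 : F) • e 4 ∧
  mul (e 2) (e 6) = (2 : F) • e 3 ∧
  mul (e 3) (e 4) = (2 * γ) • e 0 ∧
  mul (e 3) (e 5) = (2 * γ) • e 1 ∧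
  mul (e 3) (e 6) = (2 * γ) • e 2 ∧
  mul (e 4) (e 5) = (2 * γ) • e 2 ∧
  mul (e 4) (e 6) = (-(2 * γ)) • e 1 ∧
  mul (e 5) (e 6) = (2 * γ) • e 0

/-- The multiplication of the split null extension `E = M ⊕ V` of a Malcev
algebra `M` by a module `V` with representation `ρ`:
`(x + v)(y + w) = xy + (ρ_y v − ρ_x w)`. -/
def sneFun {F M V : Type*} [Field F] [AddCommGroup M] [Module F M]
    [AddCommGroup V] [Module F V]
    (mul : M → M → M) (ρ : M →ₗ[F] Module.End F V) (p q : M × V) : M × V :=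
  (mul p.1 q.1, ρ q.1 p.2 - ρ p.1 q.2)

/-- The function `{x,y,z} = (xy)z − (xz)y + 2x(yz)`. -/
def trip (F : Type*) {A : Type*} [Field F] [AddCommGroup A] [Module F A]
    (mul : A → A → A) (x y z : A) : A :=
  mul (mul x y) z - mul (mul x z) y + (2 : F) • mul x (mul y z)

/-- The function `h(y,z,t,x,u) = {yz,t,u}x + {yz,t,x}u + {yx,z,u}t + {yu,z,x}t`. -/
def hfun (F : Type*) {A : Type*} [Field F] [AddCommGroup A] [Module F A]
    (mul : A → A → A) (y z t x u : A) : A :=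
  mul (trip F mul (mul y z) t u) x + mul (trip F mul (mul y z) t x) u
    + mul (trip F mul (mul y x) z u) t + mul (trip F mul (mul y u) z x) t

/-- The function `p(x,y,z,t) = −{zt,x,y} − {yt,z,x} + {xt,y,z}`. -/
def pfun (F : Type*) {A : Type*} [Field F] [AddCommGroup A] [Module F A]
    (mul : A → A → A) (x y z t : A) : A :=
  - trip F mul (mul z t) x y - trip F mul (mul y t) z x + trip F mul (mul x t) y z

/-- `α` belongs to the centroid `Γ(M)`: `(xα)y = (xy)α = x(yα)` for all `x, y`. -/
def IsCentroidElem {F M : Type*} [Field F] [AddCommGroup M] [Module F M]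
    (mul : M →ₗ[F] M →ₗ[F] M) (α : M →ₗ[F] M) : Prop :=
  ∀ x y : M, mul (α x) y = α (mul x y) ∧ mul x (α y) = α (mul x y)

/-!
In an alternative ring the associator `(x, y, z)` alternates, so the Jacobian of the commutator is
`6 (x, y, z)` and the Malcev identity reduces to `(x, y, [x, z]) = [(x, y, z), x]`. The cocycle
identity of the associator, applied to quadruples with two adjacent entries equal to `x`, expresses
`(x, y, xz)` and `(x, y, zx)` through `(x², y, z)`, and then gives
`(x², y, z) = (x, y, z)x + x(x, y, z)`. Hence `(x, y, xz) = (x, y, z)x` and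
`(x, y, zx) = x(x, y, z)`; subtracting these two proves the claim.
-/

/-- Alternative multiplications; a mixin on `Mul`, to be imposed on non-associative rings. -/
class IsAlternative (R : Type*) [Mul R] : Prop where
  mul_self_mul : ∀ x y : R, x * x * y = x * (x * y)
  mul_mul_self : ∀ x y : R, y * (x * x) = y * x * x

/-- The non-associative ring with a given bilinear multiplication, which makes Mathlib's
`associator` and commutator bracket available for that multiplication. -/
abbrev nonUnitalNonAssocRingOfBilinear {k A : Type*} [CommSemiring k] [AddCommGroup A] [Module k A]
    (mul : A →ₗ[k] A →ₗ[k] A) : NonUnitalNonAssocRing A where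
  mul x y := mul x y
  left_distrib x := map_add (mul x)
  right_distrib := mul.map_add₂
  zero_mul := mul.map_zero₂
  mul_zero x := map_zero (mul x)

theorem malJac_lie_eq_sum_associator {R : Type*} [NonUnitalNonAssocRing R] (x y z : R) :
    malJac (fun a b : R => ⁅a, b⁆) x y z =
      associator x y z + associator y z x + associator z x y
        - associator y x z - associator x z y - associator z y x := by
  simp only [malJac, Ring.lie_def, associator_apply, mul_sub, sub_mul]
  abel

namespace IsAlternative

variable {R : Type*} [NonUnitalNonAssocRing R] [IsAlternative R]

theorem associator_self_left (x y : R) : associator x x y = 0 :=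
  sub_eq_zero.2 (mul_self_mul x y)

theorem associator_self_right (x y : R) : associator y x x = 0 :=
  sub_eq_zero.2 (mul_mul_self x y).symm

theorem associator_swap_left (x y z : R) : associator y x z = -associator x y z := by
  have h : AddMonoidHom.associator (x + y) (x + y) z = 0 := associator_self_left (x + y) z
  simp only [map_add, AddMonoidHom.add_apply, AddMonoidHom.associator_apply,
    associator_self_left, zero_add, add_zero] at h
  exact eq_neg_of_add_eq_zero_left h

theorem associator_swap_right (x y z : R) : associator x z y = -associator x y z := by
  have h : AddMonoidHom.associator x (y + z) (y + z) = 0 := associator_self_right (y + z) x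
  simp only [map_add, AddMonoidHom.add_apply, AddMonoidHom.associator_apply,
    associator_self_right, zero_add, add_zero] at h
  exact eq_neg_of_add_eq_zero_left h

theorem associator_rotate (x y z : R) : associator y z x = associator x y z := by
  rw [associator_swap_right, associator_swap_left, neg_neg]

theorem malJac_lie (x y z : R) :
    malJac (fun a b : R => ⁅a, b⁆) x y z = 6 • associator x y z := by
  rw [malJac_lie_eq_sum_associator, associator_rotate x y z, ← associator_rotate z x y,
    associator_swap_left x y z, associator_swap_right x y z, associator_swap_left y z x,
    associator_rotate x y z]
  abel

theorem associator_self_mul_right_eq_sub (x y z : R) :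
    associator x y (x * z) = associator (x * x) y z - x * associator x y z := by
  have h := associator_cocycle x x z y
  rw [associator_self_left, associator_self_left, zero_mul, associator_swap_right x y z,
    associator_swap_right (x * x) y z, associator_swap_right x y (x * z), mul_neg] at h
  linear_combination (norm := abel) -h

theorem associator_mul_self_right_eq_sub (x y z : R) :
    associator x y (z * x) = associator (x * x) y z - associator x y z * x := by
  have h := associator_cocycle y z x x
  rw [associator_self_right, associator_self_right, mul_zero, associator_rotate x y z,
    associator_rotate x y (z * x), associator_rotate (x * x) y z] at h
  linear_combination (norm := abel) h

theorem associator_sq_left (x y z : R) :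
    associator (x * x) y z = associator x y z * x + x * associator x y z := by
  have left : associator (y * x) x z = associator x y z * x - associator (x * x) y z := by
    rw [← associator_rotate, associator_mul_self_right_eq_sub, associator_swap_right (x * x) y z,
      associator_swap_right x y z, neg_mul, neg_sub_neg]
  have right : associator y x (x * z) = x * associator x y z - associator (x * x) y z := by
    rw [associator_swap_left, associator_self_mul_right_eq_sub, neg_sub]
  have h := associator_cocycle y x x z
  rw [associator_self_left, associator_self_right, mul_zero, zero_mul,
    associator_swap_left (x * x) y z, left, right] at h
  linear_combination (norm := abel) h

theorem associator_self_mul_right (x y z : R) : associator x y (x * z) = associator x y z * x := by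
  rw [associator_self_mul_right_eq_sub, associator_sq_left, add_sub_cancel_right]

theorem associator_mul_self_right (x y z : R) : associator x y (z * x) = x * associator x y z := by
  rw [associator_mul_self_right_eq_sub, associator_sq_left, add_sub_cancel_left]

theorem associator_lie_self (x y z : R) : associator x y ⁅x, z⁆ = ⁅associator x y z, x⁆ := by
  rw [Ring.lie_def, Ring.lie_def, ← associator_self_mul_right, ← associator_mul_self_right]
  exact map_sub (AddMonoidHom.associator x y) (x * z) (z * x)

end IsAlternative

theorem stmt7_alternative_minus_is_malcev_general
    {R : Type*} [NonUnitalNonAssocRing R] [IsAlternative R] :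
    IsMalcevFun (fun x y : R => ⁅x, y⁆) := by
  refine ⟨fun x => sub_self (x * x), fun x y z => ?_⟩
  calc malJac (fun a b : R => ⁅a, b⁆) x y ⁅x, z⁆
      = 6 • associator x y ⁅x, z⁆ := IsAlternative.malJac_lie x y ⁅x, z⁆
    _ = 6 • ⁅associator x y z, x⁆ := by rw [IsAlternative.associator_lie_self]
    _ = ⁅6 • associator x y z, x⁆ := by
      simp only [Ring.lie_def, smul_sub, smul_mul_assoc, mul_smul_comm]
    _ = ⁅malJac (fun a b : R => ⁅a, b⁆) x y z, x⁆ := by rw [IsAlternative.malJac_lie]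

/-- The commutator algebra of an alternative algebra is a Malcev algebra. -/
theorem stmt7_alternative_minus_is_malcev
    {F A : Type*} [Field F] [AddCommGroup A] [Module F A]
    (h2 : (2 : F) ≠ 0) (h3 : (3 : F) ≠ 0)
    (mul : A →ₗ[F] A →ₗ[F] A)
    (haltL : ∀ x y : A, mul (mul x x) y = mul x (mul x y))
    (haltR : ∀ x y : A, mul y (mul x x) = mul (mul y x) x) :
    IsMalcevFun (fun x y : A => mul x y - mul y x) := by
  let _ := nonUnitalNonAssocRingOfBilinear mul
  exact @stmt7_alternative_minus_is_malcev_general A _ ⟨haltL, haltR⟩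
end

section
/- Let F be a field with char F ≠ 2 and char F ≠ 3, and let M be a Malcev algebra over F containing a copy of M₇(F) (linearly independent e₁,…,e₇ multiplying per the M₇(F) table) such that for every nonzero m ∈ M there exists t with m·e_t ≠ 0. Then the centroid Γ(M) of M is commutative: for all α, β ∈ Γ(M), α∘β = β∘α as linear maps on M. -/
open TensorProduct

section Magma

variable {X : Type*} {mul : X → X → X} {α β : X → X}

theorem apply_apply_mul_comm (hα : ∀ x y, mul (α x) y = α (mul x y))
    (hβ : ∀ x y, mul x (β y) = β (mul x y)) (x y : X) :
    α (β (mul x y)) = β (α (mul x y)) :=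
  calc
    α (β (mul x y)) = mul (α x) (β y) := by rw [← hβ, hα]
    _ = β (α (mul x y)) := by rw [hβ, hα]

theorem stmt11_centroid_commutative_general (hmul : Function.Injective mul)
    (hα : ∀ x y, mul (α x) y = α (mul x y)) (hβ_left : ∀ x y, mul (β x) y = β (mul x y))
    (hβ_right : ∀ x y, mul x (β y) = β (mul x y)) :
    Function.Commute α β := by
  intro x
  apply hmul
  ext y
  calc
    mul (α (β x)) y = α (β (mul x y)) := by rw [hα, hβ_left]
    _ = β (α (mul x y)) := apply_apply_mul_comm hα hβ_right x y
    _ = mul (β (α x)) y := by rw [hβ_left, hα]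

end Magma

theorem injective_of_forall_exists_apply_ne_zero {R M N P ι : Type*} [CommSemiring R]
    [AddCommGroup M] [AddCommMonoid N] [AddCommMonoid P] [Module R M] [Module R N] [Module R P]
    (B : M →ₗ[R] N →ₗ[R] P) (e : ι → N) (h : ∀ m : M, m ≠ 0 → ∃ t, B m (e t) ≠ 0) :
    Function.Injective fun m n ↦ B m n := by
  refine DFunLike.coe_injective.comp <| (injective_iff_map_eq_zero B).2 fun m hm ↦ ?_
  by_contra hne
  obtain ⟨t, ht⟩ := h m hne
  exact ht (by rw [hm, LinearMap.zero_apply])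

/-- The centroid of a Malcev algebra containing `M₇(F)` on which `M₇(F)` acts
without torsion is commutative. -/
theorem stmt11_centroid_commutative
    {F M : Type*} [Field F] [AddCommGroup M] [Module F M]
    (h2 : (2 : F) ≠ 0) (h3 : (3 : F) ≠ 0)
    (mul : M →ₗ[F] M →ₗ[F] M)
    (hmalcev : IsMalcevFun (fun x y : M => mul x y))
    (e : Fin 7 → M) (he : IsM7Copy mul e)
    (hfaith : ∀ m : M, m ≠ 0 → ∃ t : Fin 7, mul m (e t) ≠ 0) :
    ∀ α β : M →ₗ[F] M, IsCentroidElem mul α → IsCentroidElem mul β →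
      α ∘ₗ β = β ∘ₗ α :=
  fun _ _ hα hβ ↦ LinearMap.ext <| stmt11_centroid_commutative_general
    (injective_of_forall_exists_apply_ne_zero mul e hfaith)
    (fun x y ↦ (hα x y).1) (fun x y ↦ (hβ x y).1) (fun x y ↦ (hβ x y).2)
end

section
/- Let F be a field with char F ≠ 2 and char F ≠ 3, and let M be a Malcev algebra over F containing a copy of M₇(F) (linearly independent e₁,…,e₇ multiplying per the M₇(F) table). Let α₁,…,α₇ be elements of the centroid Γ(M) such that Σ_{t=1}^{7} e_t α_t = 0. Then e_s α_t = 0 for all s, t ∈ {1,…,7}. -/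
open TensorProduct

/-!
A map commuting with left multiplications vanishes on a left ideal of the copy of `M₇(F)`, and
`M₇(F)` has no proper nonzero left ideals; so it is enough to find, for each `t`, one basis vector
killed by `α_t`. Number the basis from `0`. For `i ≠ 0`, multiplying on the left by `e_i` twice
kills every basis vector except one, `e_{i*}`, which goes to `-2 e_i`. Applied to `∑ e_t α_t = 0`
this leaves `-2 e_i α_{i*} = 0`. Once `α_t` vanishes for all `t ≠ 0`, the relation itself reads
`e_0 α_0 = 0`.
-/

section LeftIdeals

variable {F : Type*} [Field F]

/-- The involution `i ↦ i*` of the basis indices of `M₇(F)` that fixes `0` and sends `i ≠ 0` to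
the index with `e_i e_{i*} = ± e_0`. -/
def m7Dual : Fin 7 → Fin 7 := ![0, 4, 5, 6, 1, 2, 3]

theorem m7Dual_involutive : Function.Involutive m7Dual :=
  show ∀ i, m7Dual (m7Dual i) = i by decide

theorem m7Dual_eq_zero_iff {i : Fin 7} : m7Dual i = 0 ↔ i = 0 := by
  decide +revert

theorem m7mul_single_m7mul_single {i : Fin 7} (hi : i ≠ 0) (a : Fin 7 → F) :
    m7mul (Pi.single i 1) (m7mul (Pi.single i 1) a) =
      (-2 * a (m7Dual i)) • Pi.single i (1 : F) := by
  ext k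
  fin_cases i <;> fin_cases k <;> simp [m7mul, m7Dual] at hi ⊢

theorem m7mul_single_m7Dual_single {i : Fin 7} (hi : i ≠ 0) :
    m7mul (Pi.single (m7Dual i) 1) (Pi.single i 1) = Pi.single 0 (1 : F) ∨
      m7mul (Pi.single (m7Dual i) 1) (Pi.single i 1) = -Pi.single 0 (1 : F) := by
  fin_cases i
  · exact absurd rfl hi
  iterate 3
    · right; ext k; fin_cases k <;> simp [m7mul, m7Dual]
  iterate 3
    · left; ext k; fin_cases k <;> simp [m7mul, m7Dual]

theorem m7mul_single_zero_m7mul (a : Fin 7 → F) :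
    m7mul (Pi.single 0 1) (m7mul a (Pi.single 0 1)) =
      (4 : F) • (a 0 • Pi.single 0 (1 : F) - a) := by
  ext k
  fin_cases k <;> simp [m7mul] <;> ring

/-- Left ideals of `M₇(F)`, as subspaces of its coordinate space. -/
def IsM7LeftIdeal (I : Submodule F (Fin 7 → F)) : Prop :=
  ∀ a, ∀ b ∈ I, m7mul a b ∈ I

namespace IsM7LeftIdeal

variable {I : Submodule F (Fin 7 → F)}

theorem eq_top_of_single_zero_mem (h2 : (2 : F) ≠ 0) (hI : IsM7LeftIdeal I)
    (h0 : Pi.single 0 1 ∈ I) : I = ⊤ := by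
  have h4 : (4 : F) ≠ 0 := by
    rw [show (4 : F) = 2 * 2 by norm_num]
    exact mul_ne_zero h2 h2
  refine eq_top_iff.mpr fun a _ => ?_
  have hmem : (4 : F) • (a 0 • Pi.single 0 (1 : F) - a) ∈ I :=
    m7mul_single_zero_m7mul a ▸ hI _ _ (hI _ _ h0)
  exact (I.sub_mem_iff_right (I.smul_mem _ h0)).mp ((I.smul_mem_iff h4).mp hmem)

theorem single_zero_mem (hI : IsM7LeftIdeal I) {i : Fin 7} (hi : i ≠ 0)
    (hmem : Pi.single i 1 ∈ I) : Pi.single 0 1 ∈ I := by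
  have hprod := hI (Pi.single (m7Dual i) 1) _ hmem
  rcases m7mul_single_m7Dual_single (F := F) hi with h | h
  · rwa [h] at hprod
  · rwa [h, neg_mem_iff] at hprod

theorem single_m7Dual_mem (h2 : (2 : F) ≠ 0) (hI : IsM7LeftIdeal I) {i : Fin 7} (hi : i ≠ 0)
    {a : Fin 7 → F} (ha : a ∈ I) (hai : a i ≠ 0) : Pi.single (m7Dual i) 1 ∈ I := by
  have hprod := hI (Pi.single (m7Dual i) 1) _ (hI (Pi.single (m7Dual i) 1) _ ha)
  rw [m7mul_single_m7mul_single (m7Dual_eq_zero_iff.not.mpr hi), m7Dual_involutive] at hprod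
  exact (I.smul_mem_iff (mul_ne_zero (neg_ne_zero.mpr h2) hai)).mp hprod

theorem exists_mem_apply_ne_zero (h2 : (2 : F) ≠ 0) (hI : IsM7LeftIdeal I) (hbot : I ≠ ⊥) :
    ∃ a ∈ I, ∃ i ≠ 0, a i ≠ 0 := by
  obtain ⟨a, ha, hne⟩ := I.exists_mem_ne_zero_of_ne_bot hbot
  obtain ⟨i, hai⟩ := Function.ne_iff.mp hne
  by_cases hi : i = 0
  · subst hi
    refine ⟨_, hI (Pi.single 1 1) a ha, 1, one_ne_zero, ?_⟩
    simpa [m7mul] using And.intro h2 hai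
  · exact ⟨a, ha, i, hi, hai⟩

theorem eq_top_of_ne_bot (h2 : (2 : F) ≠ 0) (hI : IsM7LeftIdeal I) (hbot : I ≠ ⊥) : I = ⊤ := by
  obtain ⟨a, ha, i, hi, hai⟩ := hI.exists_mem_apply_ne_zero h2 hbot
  exact hI.eq_top_of_single_zero_mem h2 <|
    hI.single_zero_mem (m7Dual_eq_zero_iff.not.mpr hi) (hI.single_m7Dual_mem h2 hi ha hai)

end IsM7LeftIdeal

end LeftIdeals

section Freeness

variable {F M : Type*} [Field F] [AddCommGroup M] [Module F M]
  {mul : M →ₗ[F] M →ₗ[F] M} {φ : (Fin 7 → F) →ₗ[F] M}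

theorem isM7LeftIdeal_ker_comp (hφ : ∀ a b, mul (φ a) (φ b) = φ (m7mul a b))
    {α : M →ₗ[F] M} (hα : ∀ x y, mul x (α y) = α (mul x y)) :
    IsM7LeftIdeal (LinearMap.ker (α ∘ₗ φ)) := by
  intro a b hb
  rw [LinearMap.mem_ker, LinearMap.comp_apply] at hb ⊢
  rw [← hφ, ← hα, hb, map_zero]

theorem comp_eq_zero_of_apply_single_eq_zero (h2 : (2 : F) ≠ 0)
    (hφ : ∀ a b, mul (φ a) (φ b) = φ (m7mul a b))
    {α : M →ₗ[F] M} (hα : ∀ x y, mul x (α y) = α (mul x y))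
    {i : Fin 7} (hi : α (φ (Pi.single i 1)) = 0) : α ∘ₗ φ = 0 := by
  refine LinearMap.ker_eq_top.mp ((isM7LeftIdeal_ker_comp hφ hα).eq_top_of_ne_bot h2 ?_)
  exact (Submodule.ne_bot_iff _).mpr ⟨Pi.single i 1, hi, by simp⟩

theorem apply_single_m7Dual_eq_zero (h2 : (2 : F) ≠ 0)
    (hφ : ∀ a b, mul (φ a) (φ b) = φ (m7mul a b))
    {α : Fin 7 → M →ₗ[F] M} (hα : ∀ t x y, mul x (α t y) = α t (mul x y))
    (hsum : ∑ t, α t (φ (Pi.single t 1)) = 0) {i : Fin 7} (hi : i ≠ 0) :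
    α i (φ (Pi.single (m7Dual i) 1)) = 0 := by
  set b : Fin 7 → F := Pi.single (m7Dual i) 1 with hb
  have mul_mul_single (t : Fin 7) :
      mul (φ b) (mul (φ b) (α t (φ (Pi.single t 1)))) =
        if i = t then (-2 : F) • α i (φ b) else 0 := by
    rw [hα, hα, hφ, hφ, hb, m7mul_single_m7mul_single (m7Dual_eq_zero_iff.not.mpr hi),
      m7Dual_involutive, Pi.single_apply]
    split_ifs with h
    · rw [mul_one, map_smul, map_smul, h]
    · rw [mul_zero, zero_smul, map_zero, map_zero]
  have hsmul : (-2 : F) • α i (φ b) = 0 :=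
    calc (-2 : F) • α i (φ b)
        = ∑ t, mul (φ b) (mul (φ b) (α t (φ (Pi.single t 1)))) := by
          simp only [mul_mul_single, Finset.sum_ite_eq, Finset.mem_univ, if_true]
      _ = 0 := by rw [← map_sum, ← map_sum, hsum, map_zero, map_zero]
  exact (smul_eq_zero.mp hsmul).resolve_left (neg_ne_zero.mpr h2)

theorem IsM7Copy.mul_linearCombination (h2 : (2 : F) ≠ 0) {e : Fin 7 → M}
    (he : IsM7Copy mul e) (a b : Fin 7 → F) :
    mul (Fintype.linearCombination F e a) (Fintype.linearCombination F e b) =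
      Fintype.linearCombination F e (m7mul a b) := by
  obtain ⟨-, anti, h01, h02, h03, h04, h05, h06, h12, h13, h14, h15, h16, h23, h24, h25, h26,
    h34, h35, h36, h45, h46, h56⟩ := he
  have mul_self (s : Fin 7) : mul (e s) (e s) = 0 := by
    have two_smul_mul_self : (2 : F) • mul (e s) (e s) = 0 := by
      rw [two_smul, ← eq_neg_iff_add_eq_zero]
      exact anti s s
    exact (smul_eq_zero.mp two_smul_mul_self).resolve_left h2
  simp only [Fintype.linearCombination_apply, Fin.sum_univ_seven, map_add, map_smul,
    LinearMap.add_apply, LinearMap.smul_apply, mul_self, anti 1 0, anti 2 0, anti 3 0, anti 4 0,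
    anti 5 0, anti 6 0, anti 2 1, anti 3 1, anti 4 1, anti 5 1, anti 6 1, anti 3 2, anti 4 2,
    anti 5 2, anti 6 2, anti 4 3, anti 5 3, anti 6 3, anti 5 4, anti 6 4, anti 6 5, h01, h02,
    h03, h04, h05, h06, h12, h13, h14, h15, h16, h23, h24, h25, h26, h34, h35, h36, h45, h46,
    h56, m7mul, smul_zero, smul_neg, neg_smul, neg_neg, neg_zero, add_zero, zero_add, neg_mul,
    Matrix.cons_val_zero, Matrix.cons_val_one, Matrix.cons_val]
  module

theorem stmt12_freeness_general (h2 : (2 : F) ≠ 0)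
    (hφ : ∀ a b, mul (φ a) (φ b) = φ (m7mul a b))
    {α : Fin 7 → M →ₗ[F] M} (hα : ∀ t x y, mul x (α t y) = α t (mul x y))
    (hsum : ∑ t, α t (φ (Pi.single t 1)) = 0) (t : Fin 7) : α t ∘ₗ φ = 0 := by
  have comp_eq_zero {i : Fin 7} (hi : i ≠ 0) : α i ∘ₗ φ = 0 :=
    comp_eq_zero_of_apply_single_eq_zero h2 hφ (hα i)
      (apply_single_m7Dual_eq_zero h2 hφ hα hsum hi)
  by_cases ht : t = 0
  · subst ht
    refine comp_eq_zero_of_apply_single_eq_zero h2 hφ (hα 0) (i := 0) ?_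
    have other_terms (i : Fin 7) (hi : i ≠ 0) : α i (φ (Pi.single i 1)) = 0 :=
      LinearMap.congr_fun (comp_eq_zero hi) _
    rwa [Fintype.sum_eq_single 0 other_terms] at hsum
  · exact comp_eq_zero ht

end Freeness

/-- Freeness: if centroid elements `α₁,…,α₇` satisfy `Σ e_t α_t = 0` then
`e_s α_t = 0` for all `s, t`. -/
theorem stmt12_freeness
    {F M : Type*} [Field F] [AddCommGroup M] [Module F M]
    (h2 : (2 : F) ≠ 0) (h3 : (3 : F) ≠ 0)
    (mul : M →ₗ[F] M →ₗ[F] M)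
    (hmalcev : IsMalcevFun (fun x y : M => mul x y))
    (e : Fin 7 → M) (he : IsM7Copy mul e)
    (α : Fin 7 → (M →ₗ[F] M))
    (hα : ∀ t : Fin 7, IsCentroidElem mul (α t))
    (hsum : ∑ t : Fin 7, (α t) (e t) = 0) :
    ∀ s t : Fin 7, (α t) (e s) = 0 := by
  intro s t
  have hsum' : ∑ t, α t (Fintype.linearCombination F e (Pi.single t 1)) = 0 := by simpa using hsum
  simpa using LinearMap.congr_fun (stmt12_freeness_general h2 (he.mul_linearCombination h2)
    (fun t x y => (hα t x y).2) hsum' t) (Pi.single s 1)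
end

section
/- Let F be a field with char F ≠ 2 and char F ≠ 3, and let E be a Malcev algebra over F containing a copy of M₇(F) (linearly independent e₁,…,e₇ multiplying per the M₇(F) table). Let α ∈ Γ(E) be an element of the centroid of E such that (e₂(e₁α))e₃ = e₂((e₁α)e₃), i.e. the associator (e₂, e₁α, e₃) vanishes. Then e_t α = 0 for all t ∈ {1,…,7}. -/
open TensorProduct

/-!
A centroid element moves out of every associator, `(x, yα, z) = (x, y, z)α`, and in `M₇(F)` the
associator `(e₂, e₁, e₃)` is `-8e₇`; hence `e₇` lies in `ker α`. This kernel is an ideal, so it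
contains `e₁ = e₄e₇`, and then every `e_t`, since `e₁` multiplies the other basis elements by `±2`.
The basis element `e_{t+1}` is `e t` in the code.
-/

section Associator

variable {F M : Type*} [Field F] [AddCommGroup M] [Module F M]
  {mul : M →ₗ[F] M →ₗ[F] M} {α : M →ₗ[F] M} {e : Fin 7 → M}

/-- The associator `(x, y, z) = (xy)z − x(yz)` of an algebra whose multiplication is given as a
bilinear map (Mathlib's `associator` requires a ring structure on `M`). -/
def bilinAssociator (mul : M →ₗ[F] M →ₗ[F] M) (x y z : M) : M :=
  mul (mul x y) z - mul x (mul y z)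

theorem IsCentroidElem.bilinAssociator_map_middle (hα : IsCentroidElem mul α) (x y z : M) :
    bilinAssociator mul x (α y) z = α (bilinAssociator mul x y z) := by
  simp only [bilinAssociator, (hα _ _).1, (hα _ _).2, map_sub]

theorem IsCentroidElem.mul_mem_ker (hα : IsCentroidElem mul α) (x : M) {y : M}
    (hy : y ∈ LinearMap.ker α) : mul x y ∈ LinearMap.ker α := by
  rw [LinearMap.mem_ker] at hy ⊢
  rw [← (hα x y).2, hy, map_zero]

theorem IsM7Copy.bilinAssociator_e1_e0_e2 (he : IsM7Copy mul e) :
    bilinAssociator mul (e 1) (e 0) (e 2) = (-8 : F) • e 6 := by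
  obtain ⟨-, hanti, h01, h02, -, -, -, -, h12, -⟩ := he
  have h10 : mul (e 1) (e 0) = (-2 : F) • e 1 := by rw [hanti, h01, neg_smul]
  calc bilinAssociator mul (e 1) (e 0) (e 2)
      = (-2 : F) • mul (e 1) (e 2) - (2 : F) • mul (e 1) (e 2) := by
        rw [bilinAssociator, h10, h02, map_smul, map_smul, LinearMap.smul_apply]
    _ = (-8 : F) • e 6 := by rw [h12]; module

theorem IsM7Copy.exists_mul_e0_eq_smul (h2 : (2 : F) ≠ 0) (he : IsM7Copy mul e) {t : Fin 7}
    (ht : t ≠ 0) : ∃ c : F, c ≠ 0 ∧ mul (e t) (e 0) = c • e t := by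
  obtain ⟨-, hanti, h01, h02, h03, h04, h05, h06, -⟩ := he
  have hneg2 : (-2 : F) ≠ 0 := neg_ne_zero.mpr h2
  have of_mul_left {c : F} (hc : c ≠ 0) (h : mul (e 0) (e t) = c • e t) :
      ∃ c : F, c ≠ 0 ∧ mul (e t) (e 0) = c • e t :=
    ⟨-c, neg_ne_zero.mpr hc, by rw [hanti, h, neg_smul]⟩
  fin_cases t
  · exact absurd rfl ht
  · exact of_mul_left h2 h01
  · exact of_mul_left h2 h02
  · exact of_mul_left h2 h03
  · exact of_mul_left hneg2 h04
  · exact of_mul_left hneg2 h05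
  · exact of_mul_left hneg2 h06

theorem IsM7Copy.mem_of_e6_mem (h2 : (2 : F) ≠ 0) (he : IsM7Copy mul e) {I : Submodule F M}
    (hI : ∀ s, ∀ y ∈ I, mul (e s) y ∈ I) (h6 : e 6 ∈ I) (t : Fin 7) : e t ∈ I := by
  have h0 : e 0 ∈ I := by
    obtain ⟨-, -, -, -, -, -, -, -, -, -, -, -, -, -, -, -, -, -, -, h36, -⟩ := he
    exact h36 ▸ hI 3 (e 6) h6
  obtain rfl | ht := eq_or_ne t 0
  · exact h0
  · obtain ⟨c, hc, hmul⟩ := he.exists_mul_e0_eq_smul h2 ht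
    exact (I.smul_mem_iff hc).mp (hmul ▸ hI t (e 0) h0)

end Associator

theorem stmt13_associator_kills_centroid_general
    {F E : Type*} [Field F] [AddCommGroup E] [Module F E]
    (h2 : (2 : F) ≠ 0)
    (mul : E →ₗ[F] E →ₗ[F] E)
    (e : Fin 7 → E) (he : IsM7Copy mul e)
    (α : E →ₗ[F] E) (hα : IsCentroidElem mul α)
    (hassoc : mul (mul (e 1) (α (e 0))) (e 2) = mul (e 1) (mul (α (e 0)) (e 2))) :
    ∀ t : Fin 7, α (e t) = 0 := by
  have hneg8 : (-8 : F) ≠ 0 := by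
    rw [show (-8 : F) = -2 ^ 3 by norm_num]
    exact neg_ne_zero.mpr (pow_ne_zero 3 h2)
  have h6 : (-8 : F) • e 6 ∈ LinearMap.ker α := by
    rw [LinearMap.mem_ker, ← he.bilinAssociator_e1_e0_e2, ← hα.bilinAssociator_map_middle]
    exact sub_eq_zero.mpr hassoc
  exact he.mem_of_e6_mem h2 (fun s _ hy => hα.mul_mem_ker (e s) hy)
    ((Submodule.smul_mem_iff _ hneg8).mp h6)

/-- If a centroid element `α` of a Malcev algebra containing `M₇(F)` satisfies
`(e₂, e₁α, e₃) = 0`, then `α` kills the copy of `M₇(F)`. -/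
theorem stmt13_associator_kills_centroid
    {F E : Type*} [Field F] [AddCommGroup E] [Module F E]
    (h2 : (2 : F) ≠ 0) (h3 : (3 : F) ≠ 0)
    (mul : E →ₗ[F] E →ₗ[F] E)
    (hmalcev : IsMalcevFun (fun x y : E => mul x y))
    (e : Fin 7 → E) (he : IsM7Copy mul e)
    (α : E →ₗ[F] E) (hα : IsCentroidElem mul α)
    (hassoc : mul (mul (e 1) (α (e 0))) (e 2) = mul (e 1) (mul (α (e 0)) (e 2))) :
    ∀ t : Fin 7, α (e t) = 0 := by
  exact stmt13_associator_kills_centroid_general h2 mul e he α hα hassoc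
end

section
/- Let F be a field with char F ≠ 2 and char F ≠ 3, and let E be a Malcev algebra over F equipped with an involution x ↦ x̄ such that every symmetric element of E lies in the nucleus of E. Suppose E contains a copy of M₇(F) (linearly independent e₁,…,e₇ multiplying per the M₇(F) table) with ē_t = −e_t for all t. If α ∈ Γ(E) is a centroid element satisfying (xα)‾ = −x̄α for all x ∈ E (i.e. α is skew-adjoint with respect to the involution), then e_t α = 0 for all t ∈ {1,…,7}. -/
open TensorProduct

/-!
A skew-adjoint `α` sends the skew element `e₁` to a symmetric, hence nuclear, element. As `α` is in
the centroid, `(e₁α, e₁, x) = (e₁, e₁, x)α`, so `e₁² = 0` gives `(e₁(e₁x))α = 0` for every `x`. Each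
`e_t` with `t ≠ 1` is an eigenvector of multiplication by `e₁` with eigenvalue `±2`, so `e_tα = 0`,
and finally `e₁α = (e₂e₅)α = (e₂α)e₅ = 0`.
-/

namespace IsCentroidElem

variable {F M : Type*} [Field F] [AddCommGroup M] [Module F M]
  {mul : M →ₗ[F] M →ₗ[F] M} {α : M →ₗ[F] M} {a x : M}

theorem map_mul_assoc (hα : IsCentroidElem mul α)
    (hnuc : ∀ y z, mul (mul (α a) y) z = mul (α a) (mul y z)) (y z : M) :
    α (mul (mul a y) z) = α (mul a (mul y z)) :=
  calc α (mul (mul a y) z) = mul (mul (α a) y) z := by rw [(hα a y).1, (hα _ z).1]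
    _ = mul (α a) (mul y z) := hnuc y z
    _ = α (mul a (mul y z)) := (hα a _).1

theorem map_eq_zero_of_mul_eq_smul (hα : IsCentroidElem mul α)
    (hnuc : ∀ y z, mul (mul (α a) y) z = mul (α a) (mul y z)) (ha : mul a a = 0)
    {c : F} (hc : c ≠ 0) (hx : mul a x = c • x) : α x = 0 := by
  have hcc : (c * c) • α x = 0 :=
    calc (c * c) • α x = α (mul a (mul a x)) := by simp only [hx, map_smul, smul_smul]
      _ = α (mul (mul a a) x) := (hα.map_mul_assoc hnuc a x).symm
      _ = 0 := by rw [ha, map_zero, LinearMap.zero_apply, map_zero]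
  exact (smul_eq_zero.mp hcc).resolve_left (mul_ne_zero hc hc)

theorem map_mul_eq_zero_of_left (hα : IsCentroidElem mul α) (hx : α x = 0) (y : M) :
    α (mul x y) = 0 := by
  rw [← (hα x y).1, hx, map_zero, LinearMap.zero_apply]

end IsCentroidElem

namespace IsM7Copy

variable {F M : Type*} [Field F] [AddCommGroup M] [Module F M]
  {mul : M →ₗ[F] M →ₗ[F] M} {e : Fin 7 → M}

theorem mul_self_eq_zero (he : IsM7Copy mul e) (h2 : (2 : F) ≠ 0) (t : Fin 7) :
    mul (e t) (e t) = 0 := by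
  have hdouble : (2 : F) • mul (e t) (e t) = 0 := by
    rw [two_smul]
    exact eq_neg_iff_add_eq_zero.mp (he.2.1 t t)
  exact (smul_eq_zero.mp hdouble).resolve_left h2

theorem exists_ne_zero_mul_zero_eq_smul (he : IsM7Copy mul e) (h2 : (2 : F) ≠ 0)
    {t : Fin 7} (ht : t ≠ 0) :
    ∃ c : F, c ≠ 0 ∧ mul (e 0) (e t) = c • e t := by
  have hneg : (-2 : F) ≠ 0 := neg_ne_zero.mpr h2
  obtain ⟨-, -, h01, h02, h03, h04, h05, h06, -⟩ := he
  fin_cases t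
  exacts [absurd rfl ht, ⟨2, h2, h01⟩, ⟨2, h2, h02⟩, ⟨2, h2, h03⟩,
    ⟨-2, hneg, h04⟩, ⟨-2, hneg, h05⟩, ⟨-2, hneg, h06⟩]

theorem mul_one_four (he : IsM7Copy mul e) : mul (e 1) (e 4) = e 0 := by
  obtain ⟨-, -, -, -, -, -, -, -, -, -, h14, -⟩ := he
  exact h14

end IsM7Copy

theorem stmt14_skew_centroid_vanishes_general
    {F M : Type*} [Field F] [AddCommGroup M] [Module F M] (h2 : (2 : F) ≠ 0)
    {mul : M →ₗ[F] M →ₗ[F] M} {e : Fin 7 → M} (he : IsM7Copy mul e)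
    {α : M →ₗ[F] M} (hα : IsCentroidElem mul α)
    (hnuc : ∀ x y, mul (mul (α (e 0)) x) y = mul (α (e 0)) (mul x y)) (t : Fin 7) :
    α (e t) = 0 := by
  have eigen : ∀ s ≠ 0, α (e s) = 0 := by
    intro s hs
    obtain ⟨c, hc, hcs⟩ := he.exists_ne_zero_mul_zero_eq_smul h2 hs
    exact hα.map_eq_zero_of_mul_eq_smul hnuc (he.mul_self_eq_zero h2 0) hc hcs
  obtain rfl | ht := eq_or_ne t 0
  · rw [← he.mul_one_four]
    exact hα.map_mul_eq_zero_of_left (eigen 1 one_ne_zero) (e 4)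
  · exact eigen t ht

/-- In a Malcev algebra with `J`-admissible involution containing `M₇(F)` with
`ē_t = −e_t`, every skew-adjoint centroid element kills the copy of `M₇(F)`. -/
theorem stmt14_skew_centroid_vanishes
    {F E : Type*} [Field F] [AddCommGroup E] [Module F E]
    (h2 : (2 : F) ≠ 0) (h3 : (3 : F) ≠ 0)
    (mul : E →ₗ[F] E →ₗ[F] E)
    (hmalcev : IsMalcevFun (fun x y : E => mul x y))
    (σ : E →ₗ[F] E)
    (hσσ : ∀ x, σ (σ x) = x)
    (hσmul : ∀ x y, σ (mul x y) = mul (σ y) (σ x))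
    (hnuc : ∀ z : E, σ z = z → ∀ x y : E,
      mul (mul z x) y = mul z (mul x y) ∧
      mul (mul x z) y = mul x (mul z y) ∧
      mul (mul x y) z = mul x (mul y z))
    (e : Fin 7 → E) (he : IsM7Copy mul e)
    (hσe : ∀ t : Fin 7, σ (e t) = - e t)
    (α : E →ₗ[F] E) (hα : IsCentroidElem mul α)
    (hskew : ∀ x : E, σ (α x) = - α (σ x)) :
    ∀ t : Fin 7, α (e t) = 0 := by
  have hsymm : σ (α (e 0)) = α (e 0) := by rw [hskew, hσe, map_neg, neg_neg]
  exact stmt14_skew_centroid_vanishes_general h2 he hα fun x y => (hnuc _ hsymm x y).1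
end
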